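/- Let k : ℝ² → ℂ be measurable and satisfy the Kernel assumption (B.1). Then there exists a compact continuous linear operator K on L²(ℝ; ℂ) such that for every u ∈ L²(ℝ; ℂ) one has (K u)(s) = ∫_ℝ k(s,t) u(t) dt for almost every s ∈ ℝ (in particular, the integral on the right converges absolutely for almost every s, and the resulting function lies in L²(ℝ; ℂ)). -/

import Mathlib

open MeasureTheory

/-!
The kernel is dominated by a convolution kernel, `‖k (s, t)‖ ≤ φ (s - t)` with `φ ∈ L¹`, so by the
Schur test it defines a bounded operator on `L²` of norm at most `‖φ‖₁`. Multiply `k` by the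
indicator of `{(s, t) | s - t ∈ A}`, where `A` is a bounded set on which `φ` is bounded. Because `k`
vanishes where `s` and `t` are both large and of the same sign, this truncation is bounded with
bounded support, hence square integrable, and its operator is Hilbert-Schmidt and so compact. What
was cut off is dominated by the part of `φ` outside `A`, so a second use of the Schur test makes its
operator norm at most `∫⁻ x in Aᶜ, φ x`, which is arbitrarily small. Compact operators are closed
under norm limits.
-/

open scoped ENNReal NNReal

section SchurTest

variable {X Y 𝕜 : Type*} [MeasurableSpace X] [MeasurableSpace Y] {μ : Measure X} {ν : Measure Y}

lemma lintegral_mul_rpow_le {w f : Y → ℝ≥0∞} (hw : AEMeasurable w ν) (hf : AEMeasurable f ν)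
    {p : ℝ} (hp : 1 ≤ p) :
    (∫⁻ y, w y * f y ∂ν) ^ p ≤ (∫⁻ y, w y ∂ν) ^ (p - 1) * ∫⁻ y, w y * f y ^ p ∂ν := by
  have hp₀ : 0 < p := by linarith
  have hsub : 0 ≤ 1 - p⁻¹ := sub_nonneg.2 (inv_le_one_of_one_le₀ hp)
  have hsplit (y : Y) : w y * f y = w y ^ (1 - p⁻¹) * (w y * f y ^ p) ^ p⁻¹ := by
    rw [ENNReal.mul_rpow_of_nonneg _ _ (by positivity), ENNReal.rpow_rpow_inv hp₀.ne', ← mul_assoc,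
      ← ENNReal.rpow_add_of_nonneg _ _ hsub (by positivity), sub_add_cancel, ENNReal.rpow_one]
  calc (∫⁻ y, w y * f y ∂ν) ^ p
      = (∫⁻ y, w y ^ (1 - p⁻¹) * (w y * f y ^ p) ^ p⁻¹ ∂ν) ^ p := by simp_rw [← hsplit]
    _ ≤ ((∫⁻ y, w y ∂ν) ^ (1 - p⁻¹) * (∫⁻ y, w y * f y ^ p ∂ν) ^ p⁻¹) ^ p := by
        gcongr
        exact ENNReal.lintegral_mul_norm_pow_le hw (by fun_prop) hsub (by positivity)
          (sub_add_cancel _ _)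
    _ = (∫⁻ y, w y ∂ν) ^ (p - 1) * ∫⁻ y, w y * f y ^ p ∂ν := by
        rw [ENNReal.mul_rpow_of_nonneg _ _ hp₀.le, ENNReal.rpow_inv_rpow hp₀.ne',
          ← ENNReal.rpow_mul, sub_mul, one_mul, inv_mul_cancel₀ hp₀.ne']

variable [SFinite μ] [SFinite ν]

lemma lintegral_lintegral_mul_rpow_le {k : X × Y → ℝ≥0∞} (hk : AEMeasurable k (μ.prod ν))
    {f : Y → ℝ≥0∞} (hf : AEMeasurable f ν) {A B : ℝ≥0∞}
    (hA : ∀ᵐ x ∂μ, ∫⁻ y, k (x, y) ∂ν ≤ A) (hB : ∀ᵐ y ∂ν, ∫⁻ x, k (x, y) ∂μ ≤ B)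
    {p : ℝ} (hp : 1 ≤ p) :
    ∫⁻ x, (∫⁻ y, k (x, y) * f y ∂ν) ^ p ∂μ ≤ A ^ (p - 1) * B * ∫⁻ y, f y ^ p ∂ν := by
  have hp' : 0 ≤ p - 1 := sub_nonneg.2 hp
  have hkf : AEMeasurable (fun z : X × Y ↦ k z * f z.2 ^ p) (μ.prod ν) :=
    hk.mul (hf.comp_snd.pow_const p)
  calc ∫⁻ x, (∫⁻ y, k (x, y) * f y ∂ν) ^ p ∂μ
      ≤ ∫⁻ x, A ^ (p - 1) * ∫⁻ y, k (x, y) * f y ^ p ∂ν ∂μ := by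
        apply lintegral_mono_ae
        filter_upwards [hA, hk.aestronglyMeasurable.prodMk_left] with x hAx hkx
        grw [lintegral_mul_rpow_le hkx.aemeasurable hf hp, hAx]
    _ = A ^ (p - 1) * ∫⁻ y, ∫⁻ x, k (x, y) * f y ^ p ∂μ ∂ν := by
        rw [lintegral_const_mul'' _ hkf.lintegral_prod_right', lintegral_lintegral_swap hkf]
    _ ≤ A ^ (p - 1) * ∫⁻ y, B * f y ^ p ∂ν := by
        gcongr 1
        apply lintegral_mono_ae
        filter_upwards [hB, hk.prod_swap.aestronglyMeasurable.prodMk_left] with y hBy hky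
        have hky' : AEMeasurable (fun x ↦ k (x, y)) μ := hky.aemeasurable
        rw [lintegral_mul_const'' _ hky']
        gcongr
    _ = A ^ (p - 1) * B * ∫⁻ y, f y ^ p ∂ν := by
        rw [lintegral_const_mul'' _ (hf.pow_const p), mul_assoc]

/-- The hypothesis of the Schur test: `A` bounds the `L¹` norms of almost all rows `k (x, ·)` of the
kernel, and `B` those of almost all columns `k (·, y)`. -/
structure SchurBound [ENorm 𝕜] (k : X × Y → 𝕜) (μ : Measure X) (ν : Measure Y) (A B : ℝ≥0) :
    Prop where
  row : ∀ᵐ x ∂μ, ∫⁻ y, ‖k (x, y)‖ₑ ∂ν ≤ A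
  col : ∀ᵐ y ∂ν, ∫⁻ x, ‖k (x, y)‖ₑ ∂μ ≤ B

lemma SchurBound.eLpNorm_lintegral_le [NormedDivisionRing 𝕜] {k : X × Y → 𝕜} {A B : ℝ≥0}
    (h : SchurBound k μ ν A B) (hk : AEStronglyMeasurable k (μ.prod ν)) {p : ℝ≥0∞} (hp : 1 ≤ p)
    (hp_top : p ≠ ∞) {u : Y → 𝕜} (hu : AEStronglyMeasurable u ν) :
    eLpNorm (fun x ↦ ∫⁻ y, ‖k (x, y) * u y‖ₑ ∂ν) p μ ≤
      (A ^ (1 - p.toReal⁻¹) * B ^ p.toReal⁻¹ : ℝ≥0) * eLpNorm u p ν := by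
  have hp₀ : p ≠ 0 := (zero_lt_one.trans_le hp).ne'
  have hp₁ : 1 ≤ p.toReal := by simpa using ENNReal.toReal_mono hp_top hp
  have hp_pos : 0 < p.toReal := by linarith
  have hsub : 0 ≤ 1 - p.toReal⁻¹ := sub_nonneg.2 (inv_le_one_of_one_le₀ hp₁)
  rw [eLpNorm_eq_lintegral_rpow_enorm_toReal hp₀ hp_top,
    eLpNorm_eq_lintegral_rpow_enorm_toReal hp₀ hp_top]
  simp only [enorm_eq_self, enorm_mul, one_div]
  calc (∫⁻ x, (∫⁻ y, ‖k (x, y)‖ₑ * ‖u y‖ₑ ∂ν) ^ p.toReal ∂μ) ^ p.toReal⁻¹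
      ≤ ((A : ℝ≥0∞) ^ (p.toReal - 1) * B * ∫⁻ y, ‖u y‖ₑ ^ p.toReal ∂ν) ^ p.toReal⁻¹ := by
        gcongr
        exact lintegral_lintegral_mul_rpow_le hk.enorm hu.enorm h.row h.col hp₁
    _ = _ := by
        have hinv : 0 ≤ p.toReal⁻¹ := by positivity
        rw [ENNReal.mul_rpow_of_nonneg _ _ hinv, ENNReal.mul_rpow_of_nonneg _ _ hinv,
          ← ENNReal.rpow_mul, sub_mul, one_mul, mul_inv_cancel₀ hp_pos.ne', ENNReal.coe_mul,
          ENNReal.coe_rpow_of_nonneg _ hsub, ENNReal.coe_rpow_of_nonneg _ hinv]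

end SchurTest

section IntegralOperator

variable {X Y 𝕜 E : Type*} [MeasurableSpace X] [MeasurableSpace Y] {μ : Measure X} {ν : Measure Y}
  {p q : ℝ≥0∞}

lemma ae_lt_top_of_eLpNorm_ne_top {f : X → ℝ≥0∞} (hf : AEMeasurable f μ) (hq : q ≠ 0)
    (h : eLpNorm f q μ ≠ ∞) : ∀ᵐ x ∂μ, f x < ∞ := by
  by_cases hq_top : q = ∞
  · subst hq_top
    filter_upwards [ae_le_eLpNormEssSup (f := f) (μ := μ)] with x hx
    exact hx.trans_lt h.lt_top
  · have hint : ∫⁻ x, f x ^ q.toReal ∂μ < ∞ :=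
      lintegral_rpow_enorm_lt_top_of_eLpNorm_lt_top hq hq_top h.lt_top
    filter_upwards [ae_lt_top' (hf.pow_const _) hint.ne] with x hx
    exact (ENNReal.rpow_lt_top_iff_of_pos (ENNReal.toReal_pos hq hq_top)).1 hx

section Parametric

variable [NormedAddCommGroup E]

lemma ae_integrable_of_eLpNorm_lintegral_enorm_ne_top [SFinite ν] {F : X × Y → E}
    (hF : AEStronglyMeasurable F (μ.prod ν)) (hq : q ≠ 0)
    (h : eLpNorm (fun x ↦ ∫⁻ y, ‖F (x, y)‖ₑ ∂ν) q μ ≠ ∞) :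
    ∀ᵐ x ∂μ, Integrable (fun y ↦ F (x, y)) ν := by
  have hfin := ae_lt_top_of_eLpNorm_ne_top hF.enorm.lintegral_prod_right' hq h
  filter_upwards [hF.prodMk_left, hfin] with x hFx hx using ⟨hFx, hx⟩

lemma eLpNorm_integral_le_eLpNorm_lintegral_enorm [NormedSpace ℝ E] (F : X × Y → E) :
    eLpNorm (fun x ↦ ∫ y, F (x, y) ∂ν) q μ ≤ eLpNorm (fun x ↦ ∫⁻ y, ‖F (x, y)‖ₑ ∂ν) q μ :=
  eLpNorm_mono_enorm fun _ ↦ (enorm_integral_le_lintegral_enorm _).trans_eq (enorm_eq_self _).symm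

end Parametric

variable [RCLike 𝕜] {k l : X × Y → 𝕜}

/-- `K` is the integral operator with kernel `k`: for every `u ∈ Lᵖ(ν)` and almost every `x`,
`(K u) x = ∫ k (x, y) u(y) dν(y)`, the integral being absolutely convergent. -/
def IsIntegralOperator [Fact (1 ≤ p)] [Fact (1 ≤ q)] (k : X × Y → 𝕜) (K : Lp 𝕜 p ν →L[𝕜] Lp 𝕜 q μ) :
    Prop :=
  ∀ u : Lp 𝕜 p ν, (∀ᵐ x ∂μ, Integrable (fun y ↦ k (x, y) * u y) ν) ∧
    ∀ᵐ x ∂μ, K u x = ∫ y, k (x, y) * u y ∂ν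

variable [Fact (1 ≤ p)] [Fact (1 ≤ q)] {K L : Lp 𝕜 p ν →L[𝕜] Lp 𝕜 q μ}

lemma IsIntegralOperator.sub (hK : IsIntegralOperator k K) (hL : IsIntegralOperator l L) :
    IsIntegralOperator (k - l) (K - L) := by
  intro u
  obtain ⟨hKi, hKu⟩ := hK u
  obtain ⟨hLi, hLu⟩ := hL u
  simp only [Pi.sub_apply, sub_mul]
  refine ⟨by filter_upwards [hKi, hLi] with x using Integrable.sub, ?_⟩
  filter_upwards [hKi, hLi, hKu, hLu, Lp.coeFn_sub (K u) (L u)] with x hkx hlx hKx hLx hsub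
  rw [integral_sub hkx hlx, ← hKx, ← hLx, sub_apply, hsub, Pi.sub_apply]

lemma IsIntegralOperator.opNNNorm_le (hK : IsIntegralOperator k K) {C : ℝ≥0}
    (hC : ∀ u : Lp 𝕜 p ν, eLpNorm (fun x ↦ ∫⁻ y, ‖k (x, y) * u y‖ₑ ∂ν) q μ ≤ C * ‖u‖ₑ) :
    ‖K‖₊ ≤ C := by
  refine K.opNNNorm_le_bound C fun u ↦ ?_
  have hu : ‖K u‖ₑ ≤ C * ‖u‖ₑ := by
    rw [Lp.enorm_def, eLpNorm_congr_ae (hK u).2]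
    exact (eLpNorm_integral_le_eLpNorm_lintegral_enorm fun z ↦ k z * u z.2).trans (hC u)
  simp only [enorm_eq_nnnorm] at hu
  exact_mod_cast hu

lemma exists_isIntegralOperator [SFinite ν] (hk : AEStronglyMeasurable k (μ.prod ν)) {C : ℝ≥0}
    (hC : ∀ u : Lp 𝕜 p ν, eLpNorm (fun x ↦ ∫⁻ y, ‖k (x, y) * u y‖ₑ ∂ν) q μ ≤ C * ‖u‖ₑ) :
    ∃ K : Lp 𝕜 p ν →L[𝕜] Lp 𝕜 q μ, IsIntegralOperator k K := by
  have hq : q ≠ 0 := (zero_lt_one.trans_le Fact.out).ne'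
  have hku (u : Lp 𝕜 p ν) : AEStronglyMeasurable (fun z : X × Y ↦ k z * u z.2) (μ.prod ν) :=
    hk.mul (Lp.aestronglyMeasurable u).comp_snd
  have hint (u : Lp 𝕜 p ν) : ∀ᵐ x ∂μ, Integrable (fun y ↦ k (x, y) * u y) ν :=
    ae_integrable_of_eLpNorm_lintegral_enorm_ne_top (hku u) hq
      (ne_top_of_le_ne_top (by finiteness) (hC u))
  have hnorm (u : Lp 𝕜 p ν) : eLpNorm (fun x ↦ ∫ y, k (x, y) * u y ∂ν) q μ ≤ C * ‖u‖ₑ :=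
    (eLpNorm_integral_le_eLpNorm_lintegral_enorm fun z ↦ k z * u z.2).trans (hC u)
  have hmem (u : Lp 𝕜 p ν) : MemLp (fun x ↦ ∫ y, k (x, y) * u y ∂ν) q μ :=
    ⟨(hku u).integral_prod_right', (hnorm u).trans_lt (by finiteness)⟩
  let T : Lp 𝕜 p ν →ₗ[𝕜] Lp 𝕜 q μ :=
    { toFun u := (hmem u).toLp
      map_add' u v := by
        rw [← MemLp.toLp_add]
        apply MemLp.toLp_congr
        filter_upwards [hint u, hint v] with x hux hvx
        rw [Pi.add_apply, ← integral_add hux hvx]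
        apply integral_congr_ae
        filter_upwards [Lp.coeFn_add u v] with y hy
        rw [hy, Pi.add_apply, mul_add]
      map_smul' c u := by
        rw [RingHom.id_apply, ← MemLp.toLp_const_smul]
        apply MemLp.toLp_congr
        refine .of_forall fun x ↦ ?_
        rw [Pi.smul_apply, ← integral_smul]
        apply integral_congr_ae
        filter_upwards [Lp.coeFn_smul c u] with y hy
        rw [hy, Pi.smul_apply, mul_smul_comm] }
  have hT (u : Lp 𝕜 p ν) : ‖T u‖ ≤ C * ‖u‖ := by
    have hu : ‖T u‖ₑ ≤ C * ‖u‖ₑ := (Lp.enorm_toLp (hmem u)).trans_le (hnorm u)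
    simp only [enorm_eq_nnnorm] at hu
    exact_mod_cast hu
  exact ⟨T.mkContinuous C hT, fun u ↦ ⟨hint u, (hmem u).coeFn_toLp⟩⟩

end IntegralOperator

section HilbertSchmidt

section Abstract

variable {𝕜 ι E F : Type*} [RCLike 𝕜] [NormedAddCommGroup E] [InnerProductSpace 𝕜 E]
  [NormedAddCommGroup F] [NormedSpace 𝕜 F]

lemma norm_sum_smulRight_innerSL_sq_le {v : ι → E} (hv : Orthonormal 𝕜 v) (f : ι → F)
    (s : Finset ι) :
    ‖∑ i ∈ s, (innerSL 𝕜 (v i)).smulRight (f i)‖ ^ 2 ≤ ∑ i ∈ s, ‖f i‖ ^ 2 := by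
  rw [← Real.le_sqrt (norm_nonneg _) (by positivity)]
  refine ContinuousLinearMap.opNorm_le_bound _ (Real.sqrt_nonneg _) fun u ↦ ?_
  refine (pow_le_pow_iff_left₀ (norm_nonneg _) (by positivity) two_ne_zero).1 ?_
  calc ‖(∑ i ∈ s, (innerSL 𝕜 (v i)).smulRight (f i)) u‖ ^ 2
      = ‖∑ i ∈ s, inner 𝕜 (v i) u • f i‖ ^ 2 := by simp
    _ ≤ (∑ i ∈ s, ‖inner 𝕜 (v i) u‖ * ‖f i‖) ^ 2 := by
        gcongr
        exact norm_sum_le_of_le s fun i _ ↦ (norm_smul _ _).le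
    _ ≤ (∑ i ∈ s, ‖inner 𝕜 (v i) u‖ ^ 2) * ∑ i ∈ s, ‖f i‖ ^ 2 :=
        Finset.sum_mul_sq_le_sq_mul_sq _ _ _
    _ ≤ ‖u‖ ^ 2 * ∑ i ∈ s, ‖f i‖ ^ 2 := by
        gcongr
        exact hv.sum_inner_products_le u
    _ = (√(∑ i ∈ s, ‖f i‖ ^ 2) * ‖u‖) ^ 2 := by
        rw [mul_pow, Real.sq_sqrt (by positivity), mul_comm]

variable [CompleteSpace F]

lemma summable_smulRight_innerSL {v : ι → E} (hv : Orthonormal 𝕜 v) {f : ι → F}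
    (hf : Summable fun i ↦ ‖f i‖ ^ 2) : Summable fun i ↦ (innerSL 𝕜 (v i)).smulRight (f i) := by
  rw [summable_iff_vanishing_norm] at hf ⊢
  intro ε hε
  obtain ⟨s, hs⟩ := hf (ε ^ 2) (by positivity)
  refine ⟨s, fun t ht ↦ lt_of_pow_lt_pow_left₀ 2 hε.le ?_⟩
  exact (norm_sum_smulRight_innerSL_sq_le hv f t).trans_lt
    ((Real.le_norm_self _).trans_lt (hs t ht))

lemma hasSum_smulRight_innerSL (b : HilbertBasis ι 𝕜 E) {T : E →L[𝕜] F}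
    (hT : Summable fun i ↦ ‖T (b i)‖ ^ 2) :
    HasSum (fun i ↦ (innerSL 𝕜 (b i)).smulRight (T (b i))) T := by
  have hsum := (summable_smulRight_innerSL b.orthonormal hT).hasSum
  convert hsum
  ext u
  have hTu : HasSum (fun i ↦ inner 𝕜 (b i) u • T (b i)) (T u) := by
    simpa [b.repr_apply_apply] using (b.hasSum_repr u).mapL T
  exact hTu.unique (by simpa using! hsum.mapL (ContinuousLinearMap.apply 𝕜 F u))

theorem isCompactOperator_of_summable_norm_sq (b : HilbertBasis ι 𝕜 E) {T : E →L[𝕜] F}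
    (hT : Summable fun i ↦ ‖T (b i)‖ ^ 2) : IsCompactOperator T := by
  refine isCompactOperator_of_tendsto (hasSum_smulRight_innerSL b hT) (.of_forall fun s ↦ ?_)
  refine (compactOperator (RingHom.id 𝕜) E F).sum_mem fun i _ ↦ ?_
  exact (isCompactOperator_of_locallyCompactSpace_dom (innerSL 𝕜 (b i))).clm_comp
    (ContinuousLinearMap.toSpanSingleton 𝕜 (T (b i)))

end Abstract

variable {X Y 𝕜 E : Type*} [MeasurableSpace X] [MeasurableSpace Y] {μ : Measure X} {ν : Measure Y}

lemma eLpNorm_two_sq_eq_lintegral {ε : Type*} [ENorm ε] (f : X → ε) :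
    eLpNorm f 2 μ ^ 2 = ∫⁻ x, ‖f x‖ₑ ^ 2 ∂μ := by
  simpa using eLpNorm_nnreal_pow_eq_lintegral (μ := μ) (f := f) (p := 2) two_ne_zero

lemma lintegral_mul_sq_le {f g : Y → ℝ≥0∞} (hf : AEMeasurable f ν) (hg : AEMeasurable g ν) :
    (∫⁻ y, f y * g y ∂ν) ^ 2 ≤ (∫⁻ y, f y ^ 2 ∂ν) * ∫⁻ y, g y ^ 2 ∂ν := by
  have hHolder := ENNReal.lintegral_mul_le_Lp_mul_Lq ν Real.HolderConjugate.two_two hf hg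
  simp only [Pi.mul_apply, ENNReal.rpow_two] at hHolder
  calc (∫⁻ y, f y * g y ∂ν) ^ 2
      ≤ ((∫⁻ y, f y ^ 2 ∂ν) ^ (1 / 2 : ℝ) * (∫⁻ y, g y ^ 2 ∂ν) ^ (1 / 2 : ℝ)) ^ 2 := by gcongr
    _ = _ := by
        rw [← ENNReal.rpow_two, ENNReal.mul_rpow_of_nonneg _ _ zero_le_two, one_div,
          ENNReal.rpow_inv_rpow two_ne_zero, ENNReal.rpow_inv_rpow two_ne_zero]

lemma sum_enorm_integral_mul_sq_le {ι : Type*} [RCLike 𝕜] {v : ι → Lp 𝕜 2 ν} (hv : Orthonormal 𝕜 v)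
    {g : Y → 𝕜} (hg : MemLp g 2 ν) (s : Finset ι) :
    ∑ i ∈ s, ‖∫ y, g y * v i y ∂ν‖ₑ ^ 2 ≤ ∫⁻ y, ‖g y‖ₑ ^ 2 ∂ν := by
  set G : Lp 𝕜 2 ν := hg.star.toLp with hG
  have hinner (i : ι) : inner 𝕜 G (v i) = ∫ y, g y * v i y ∂ν := by
    rw [L2.inner_def]
    apply integral_congr_ae
    filter_upwards [hg.star.coeFn_toLp] with y hy
    rw [hG, hy, RCLike.inner_apply', Pi.star_apply, RCLike.star_def, RCLike.conj_conj]
  have hGnorm : ‖G‖ₑ ^ 2 = ∫⁻ y, ‖g y‖ₑ ^ 2 ∂ν := by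
    simp [hG, eLpNorm_two_sq_eq_lintegral]
  have hBessel : ∑ i ∈ s, ‖inner 𝕜 G (v i)‖₊ ^ 2 ≤ ‖G‖₊ ^ 2 := by
    rw [← NNReal.coe_le_coe]
    push_cast
    simpa only [norm_inner_symm] using hv.sum_inner_products_le (s := s) G
  rw [← hGnorm]
  simp only [← hinner, enorm_eq_nnnorm]
  exact_mod_cast hBessel

variable [SFinite ν]

lemma ae_memLp_prodMk_left [NormedAddCommGroup E] {F : X × Y → E} {p : ℝ≥0∞} (hp : p ≠ 0)
    (hp_top : p ≠ ∞) (hF : MemLp F p (μ.prod ν)) : ∀ᵐ x ∂μ, MemLp (fun y ↦ F (x, y)) p ν := by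
  have hmeas : AEMeasurable (fun z ↦ ‖F z‖ₑ ^ p.toReal) (μ.prod ν) := by
    have := hF.1.enorm
    fun_prop
  have hfin : ∫⁻ x, ∫⁻ y, ‖F (x, y)‖ₑ ^ p.toReal ∂ν ∂μ ≠ ∞ := by
    rw [← lintegral_prod _ hmeas]
    exact (lintegral_rpow_enorm_lt_top_of_eLpNorm_lt_top hp hp_top hF.2).ne
  filter_upwards [hF.1.prodMk_left, ae_lt_top' hmeas.lintegral_prod_right' hfin] with x hFx hx
  exact ⟨hFx, (eLpNorm_lt_top_iff_lintegral_rpow_enorm_lt_top hp hp_top).2 hx⟩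

variable [RCLike 𝕜] {k : X × Y → 𝕜}

lemma eLpNorm_lintegral_mul_le_eLpNorm_mul (hk : AEStronglyMeasurable k (μ.prod ν)) {u : Y → 𝕜}
    (hu : AEStronglyMeasurable u ν) :
    eLpNorm (fun x ↦ ∫⁻ y, ‖k (x, y) * u y‖ₑ ∂ν) 2 μ ≤ eLpNorm k 2 (μ.prod ν) * eLpNorm u 2 ν := by
  have hk2 : AEMeasurable (fun z ↦ ‖k z‖ₑ ^ 2) (μ.prod ν) := hk.enorm.pow_const 2
  rw [← ENNReal.pow_le_pow_left_iff two_ne_zero, mul_pow]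
  simp only [eLpNorm_two_sq_eq_lintegral, enorm_eq_self, enorm_mul]
  rw [lintegral_prod _ hk2, ← lintegral_mul_const'' _ hk2.lintegral_prod_right']
  apply lintegral_mono_ae
  filter_upwards [hk.prodMk_left] with x hkx
  exact lintegral_mul_sq_le hkx.enorm hu.enorm

lemma exists_isIntegralOperator_of_memLp (hk : MemLp k 2 (μ.prod ν)) :
    ∃ K : Lp 𝕜 2 ν →L[𝕜] Lp 𝕜 2 μ, IsIntegralOperator k K := by
  refine exists_isIntegralOperator hk.1 (C := (eLpNorm k 2 (μ.prod ν)).toNNReal) fun u ↦ ?_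
  rw [ENNReal.coe_toNNReal hk.2.ne, Lp.enorm_def]
  exact eLpNorm_lintegral_mul_le_eLpNorm_mul hk.1 (Lp.aestronglyMeasurable u)

variable {K : Lp 𝕜 2 ν →L[𝕜] Lp 𝕜 2 μ}

lemma IsIntegralOperator.sum_enorm_apply_sq_le (hK : IsIntegralOperator k K)
    (hk : MemLp k 2 (μ.prod ν)) {ι : Type*} {v : ι → Lp 𝕜 2 ν} (hv : Orthonormal 𝕜 v)
    (s : Finset ι) : ∑ i ∈ s, ‖K (v i)‖ₑ ^ 2 ≤ eLpNorm k 2 (μ.prod ν) ^ 2 := by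
  have hKv : ∀ᵐ x ∂μ, ∀ i ∈ s, K (v i) x = ∫ y, k (x, y) * v i y ∂ν := by
    rw [Filter.eventually_all_finset]
    exact fun i _ ↦ (hK (v i)).2
  calc ∑ i ∈ s, ‖K (v i)‖ₑ ^ 2
      = ∫⁻ x, ∑ i ∈ s, ‖K (v i) x‖ₑ ^ 2 ∂μ := by
        rw [lintegral_finsetSum' _ fun i _ ↦ (Lp.aestronglyMeasurable _).enorm.pow_const 2]
        simp only [Lp.enorm_def, eLpNorm_two_sq_eq_lintegral]
    _ ≤ ∫⁻ x, ∫⁻ y, ‖k (x, y)‖ₑ ^ 2 ∂ν ∂μ := by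
        apply lintegral_mono_ae
        filter_upwards [hKv, ae_memLp_prodMk_left two_ne_zero ENNReal.ofNat_ne_top hk] with x hx hkx
        rw [Finset.sum_congr rfl fun i hi ↦ by rw [hx i hi]]
        exact sum_enorm_integral_mul_sq_le hv hkx s
    _ = eLpNorm k 2 (μ.prod ν) ^ 2 := by
        rw [eLpNorm_two_sq_eq_lintegral, lintegral_prod _ (hk.1.enorm.pow_const 2)]

theorem IsIntegralOperator.isCompactOperator_of_memLp (hK : IsIntegralOperator k K)
    (hk : MemLp k 2 (μ.prod ν)) : IsCompactOperator K := by
  obtain ⟨w, b, -⟩ := exists_hilbertBasis 𝕜 (Lp 𝕜 2 ν)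
  refine isCompactOperator_of_summable_norm_sq b ?_
  refine summable_of_sum_le (c := ((eLpNorm k 2 (μ.prod ν)).toNNReal : ℝ) ^ 2)
    (fun i ↦ by positivity) fun s ↦ ?_
  have hsum := hK.sum_enorm_apply_sq_le hk b.orthonormal s
  rw [← ENNReal.coe_toNNReal hk.2.ne] at hsum
  simp only [enorm_eq_nnnorm] at hsum
  simp only [← coe_nnnorm]
  exact_mod_cast hsum

end HilbertSchmidt

section Approximation

variable {X Y 𝕜 : Type*} [MeasurableSpace X] [MeasurableSpace Y] {μ : Measure X} {ν : Measure Y}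
  [SFinite μ] [SFinite ν] [RCLike 𝕜] {k : X × Y → 𝕜}

lemma SchurBound.eLpNorm_lintegral_le_mul_enorm {p : ℝ≥0∞} [Fact (1 ≤ p)] (hp : p ≠ ∞) {M : ℝ≥0}
    (h : SchurBound k μ ν M M) (hk : AEStronglyMeasurable k (μ.prod ν)) (u : Lp 𝕜 p ν) :
    eLpNorm (fun x ↦ ∫⁻ y, ‖k (x, y) * u y‖ₑ ∂ν) p μ ≤ M * ‖u‖ₑ := by
  have hp₁ : 1 ≤ p.toReal := by simpa using ENNReal.toReal_mono hp (Fact.out : 1 ≤ p)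
  have hM : M ^ (1 - p.toReal⁻¹) * M ^ p.toReal⁻¹ = M := by
    rw [← NNReal.rpow_add_of_nonneg _ (sub_nonneg.2 (inv_le_one_of_one_le₀ hp₁)) (by positivity),
      sub_add_cancel, NNReal.rpow_one]
  simpa [hM, Lp.enorm_def] using h.eLpNorm_lintegral_le hk Fact.out hp (Lp.aestronglyMeasurable u)

theorem IsIntegralOperator.isCompactOperator_of_forall_exists_schurBound
    {K : Lp 𝕜 2 ν →L[𝕜] Lp 𝕜 2 μ} (hK : IsIntegralOperator k K)
    (hk : AEStronglyMeasurable k (μ.prod ν))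
    (h : ∀ ε : ℝ≥0, 0 < ε → ∃ l, MemLp l 2 (μ.prod ν) ∧ SchurBound (k - l) μ ν ε ε) :
    IsCompactOperator K := by
  refine isClosed_setOfPred_isCompactOperator.closure_subset <|
    Metric.mem_closure_iff.2 fun ε hε ↦ ?_
  lift ε to ℝ≥0 using hε.le
  obtain ⟨δ, hδ, hδε⟩ := exists_between (NNReal.coe_pos.1 hε)
  obtain ⟨l, hl, hkl⟩ := h δ hδ
  obtain ⟨L, hL⟩ := exists_isIntegralOperator_of_memLp hl
  refine ⟨L, hL.isCompactOperator_of_memLp hl, ?_⟩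
  have hKL : ‖K - L‖₊ ≤ δ := (hK.sub hL).opNNNorm_le
    (hkl.eLpNorm_lintegral_le_mul_enorm ENNReal.ofNat_ne_top (hk.sub hl.1))
  rw [dist_eq_norm]
  exact_mod_cast hKL.trans_lt hδε

end Approximation

section ConvolutionDominated

section Schur

variable {G E : Type*} [AddGroup G] [MeasurableSpace G] [MeasurableAdd G] [MeasurableNeg G]
  {μ : Measure G} [SFinite μ] [μ.IsAddLeftInvariant] [μ.IsAddRightInvariant] [μ.IsNegInvariant]

lemma SchurBound.of_enorm_le_sub [ENorm E] {k : G × G → E} {φ : G → ℝ≥0∞}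
    (hk : ∀ᵐ z ∂μ.prod μ, ‖k z‖ₑ ≤ φ (z.1 - z.2)) {M : ℝ≥0} (hM : ∫⁻ x, φ x ∂μ ≤ M) :
    SchurBound k μ μ M M where
  row := by
    filter_upwards [Measure.ae_ae_of_ae_prod hk] with x hx
    exact (lintegral_mono_ae hx).trans ((lintegral_sub_left_eq_self φ x).trans_le hM)
  col := by
    have hk_swap := Measure.measurePreserving_swap.quasiMeasurePreserving.ae hk
    filter_upwards [Measure.ae_ae_of_ae_prod hk_swap] with y hy
    exact (lintegral_mono_ae hy).trans ((lintegral_sub_right_eq_self φ y).trans_le hM)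

end Schur

variable {G 𝕜 : Type*} [NormedAddCommGroup G] [MeasurableSpace G] {μ : Measure G} {φ : G → ℝ≥0∞}

lemma exists_setLIntegral_compl_lt [OpensMeasurableSpace G] (hφ : Measurable φ)
    (hφ_int : ∫⁻ x, φ x ∂μ ≠ ∞) {ε : ℝ≥0∞} (hε : ε ≠ 0) :
    ∃ n : ℕ, ∫⁻ x in {x | ‖x‖ ≤ n ∧ φ x ≤ n}ᶜ, φ x ∂μ < ε := by
  set S : ℕ → Set G := fun n ↦ {x | ‖x‖ ≤ n ∧ φ x ≤ n}ᶜ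
  have hS_meas (n : ℕ) : MeasurableSet (S n) :=
    ((measurableSet_le measurable_norm measurable_const).inter
      (measurableSet_le hφ measurable_const)).compl
  have hS_anti : Antitone S := fun m n hmn ↦ Set.compl_subset_compl.2 fun x hx ↦
    ⟨hx.1.trans (mod_cast hmn), hx.2.trans (mod_cast hmn)⟩
  have hS_inter : ⋂ n, S n ⊆ {x | φ x = ∞} := by
    intro x hx
    by_contra hx_top
    obtain ⟨m, hm⟩ := ENNReal.exists_nat_gt hx_top
    obtain ⟨n, hn⟩ := exists_nat_ge ‖x‖
    refine Set.mem_iInter.1 hx (max m n) ⟨hn.trans ?_, hm.le.trans ?_⟩ <;> gcongr <;> simp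
  have htendsto := tendsto_measure_iInter_atTop (μ := μ.withDensity φ)
    (fun n ↦ (hS_meas n).nullMeasurableSet) hS_anti
    ⟨0, ne_top_of_le_ne_top (by simpa using hφ_int) (measure_mono (Set.subset_univ _))⟩
  have hzero : μ.withDensity φ (⋂ n, S n) = 0 := by
    refine withDensity_absolutelyContinuous μ φ (measure_mono_null hS_inter ?_)
    simpa [ae_iff] using ae_lt_top hφ hφ_int
  rw [hzero] at htendsto
  obtain ⟨n, hn⟩ := (htendsto.eventually_lt_const hε.bot_lt).exists
  exact ⟨n, by rwa [← withDensity_apply _ (hS_meas n)]⟩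

variable [BorelSpace G] [ProperSpace G] [IsLocallyFiniteMeasure μ] [RCLike 𝕜] {k : G × G → 𝕜}

lemma memLp_indicator_sub_preimage (hk : AEStronglyMeasurable k (μ.prod μ))
    (hkφ : ∀ᵐ z ∂μ.prod μ, ‖k z‖ₑ ≤ φ (z.1 - z.2))
    (hsupp : ∀ r : ℝ, Bornology.IsBounded {z : G × G | k z ≠ 0 ∧ ‖z.1 - z.2‖ ≤ r})
    {A : Set G} (hA : MeasurableSet A) {n : ℕ} (hAn : ∀ x ∈ A, ‖x‖ ≤ n ∧ φ x ≤ n) {p : ℝ≥0∞} :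
    MemLp (((fun z : G × G ↦ z.1 - z.2) ⁻¹' A).indicator k) p (μ.prod μ) := by
  have hcompact : HasCompactSupport (((fun z : G × G ↦ z.1 - z.2) ⁻¹' A).indicator k) := by
    refine ((hsupp n).subset fun z hz ↦ ?_).isCompact_closure
    obtain ⟨hzA, hkz⟩ := Set.indicator_apply_ne_zero.1 hz
    exact ⟨hkz, (hAn _ hzA).1⟩
  refine hcompact.memLp_of_bound (hk.indicator (measurable_fst.sub measurable_snd hA)) n ?_
  filter_upwards [hkφ] with z hz
  by_cases hzA : z.1 - z.2 ∈ A
  · have hkz : ‖k z‖ₑ ≤ n := hz.trans (hAn _ hzA).2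
    rw [Set.indicator_of_mem (by exact hzA)]
    rw [enorm_eq_nnnorm] at hkz
    exact_mod_cast hkz
  · rw [Set.indicator_of_notMem (by exact hzA), norm_zero]
    exact n.cast_nonneg

theorem exists_isCompactOperator_isIntegralOperator_of_enorm_le_sub
    [μ.IsAddLeftInvariant] [μ.IsNegInvariant]
    (hk : AEStronglyMeasurable k (μ.prod μ)) (hφ : Measurable φ) (hφ_int : ∫⁻ x, φ x ∂μ ≠ ∞)
    (hkφ : ∀ᵐ z ∂μ.prod μ, ‖k z‖ₑ ≤ φ (z.1 - z.2))
    (hsupp : ∀ r : ℝ, Bornology.IsBounded {z : G × G | k z ≠ 0 ∧ ‖z.1 - z.2‖ ≤ r}) :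
    ∃ K : Lp 𝕜 2 μ →L[𝕜] Lp 𝕜 2 μ, IsCompactOperator K ∧ IsIntegralOperator k K := by
  have hschur : SchurBound k μ μ (∫⁻ x, φ x ∂μ).toNNReal (∫⁻ x, φ x ∂μ).toNNReal :=
    .of_enorm_le_sub hkφ (ENNReal.coe_toNNReal hφ_int).ge
  obtain ⟨K, hK⟩ := exists_isIntegralOperator (p := 2) (q := 2) hk
    (hschur.eLpNorm_lintegral_le_mul_enorm ENNReal.ofNat_ne_top hk)
  refine ⟨K, hK.isCompactOperator_of_forall_exists_schurBound hk fun ε hε ↦ ?_, hK⟩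
  obtain ⟨n, hn⟩ := exists_setLIntegral_compl_lt hφ hφ_int (ENNReal.coe_ne_zero.2 hε.ne')
  set A : Set G := {x | ‖x‖ ≤ n ∧ φ x ≤ n}
  have hA : MeasurableSet A :=
    (measurableSet_le measurable_norm measurable_const).inter (measurableSet_le hφ measurable_const)
  set D : Set (G × G) := (fun z ↦ z.1 - z.2) ⁻¹' A
  refine ⟨D.indicator k, memLp_indicator_sub_preimage hk hkφ hsupp hA fun x hx ↦ hx, ?_⟩
  rw [← Set.indicator_compl]
  refine .of_enorm_le_sub (φ := Aᶜ.indicator φ) ?_ ?_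
  · filter_upwards [hkφ] with z hz
    by_cases hzA : z.1 - z.2 ∈ A
    · simp [D, hzA]
    · simpa [D, hzA] using hz
  · rw [lintegral_indicator hA.compl]
    exact hn.le

end ConvolutionDominated

section PiecewiseBoundedKernel

lemma ae_fst_ne_snd {X : Type*} [MeasurableSpace X] [MeasurableEq X] (μ ν : Measure X) [SFinite ν]
    [NullSingletonClass ν] : ∀ᵐ z ∂μ.prod ν, z.1 ≠ z.2 := by
  refine (Measure.ae_prod_iff_ae_ae measurableSet_diagonal.compl).2 <| .of_forall fun x ↦ ?_
  filter_upwards [Measure.ae_ne ν x] with y hy using hy.symm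

/-- The radial profile of a convolution kernel dominating every kernel that satisfies (B.1) with
constants `R`, `C`, `κ`, `α`: if `s ≠ t` then `‖k (s, t)‖ ≤ kernelMajorant R C κ α |s - t|`. The
singularity is cut off at `6 * R`, the diameter of the interval `[-3 * R, 3 * R]`. -/
noncomputable def kernelMajorant (R C κ α x : ℝ) : ℝ :=
  C * ((Set.Iic (6 * R)).indicator (fun y ↦ y ^ (-α)) x + Real.exp (-κ * x))

variable {R C κ α : ℝ}

lemma measurable_kernelMajorant : Measurable (kernelMajorant R C κ α) := by
  have hrpow : Measurable ((Set.Iic (6 * R)).indicator fun y ↦ y ^ (-α)) :=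
    (measurable_id.pow_const (-α)).indicator measurableSet_Iic
  unfold kernelMajorant
  fun_prop

lemma integrable_kernelMajorant_abs (hκ : 0 < κ) (hα : α < 1) :
    Integrable fun x ↦ kernelMajorant R C κ α |x| := by
  have hsing : IntegrableOn ((Set.Iic (6 * R)).indicator fun y ↦ y ^ (-α)) (Set.Ioi 0) := by
    rw [IntegrableOn, integrable_indicator_iff measurableSet_Iic, IntegrableOn,
      Measure.restrict_restrict measurableSet_Iic, Set.Iic_inter_Ioi]
    exact (intervalIntegral.intervalIntegrable_rpow' (by linarith)).1
  have hexp : IntegrableOn (fun x ↦ Real.exp (-κ * x)) (Set.Ioi 0) :=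
    integrableOn_exp_mul_Ioi (neg_neg_of_pos hκ) 0
  simpa using (integrable_fun_norm_addHaar (E := ℝ) volume).2
    (by simpa [kernelMajorant] using! (hsing.add hexp).const_mul C)

variable {E : Type*} [NormedAddCommGroup E] {k : ℝ × ℝ → E}

lemma norm_le_kernelMajorant (hC : 0 ≤ C)
    (hnear : ∀ s t : ℝ, s ≠ t → |s| ≤ 3 * R → |t| ≤ 3 * R → ‖k (s, t)‖ ≤ C * |s - t| ^ (-α))
    (hfar : ∀ s t : ℝ, s ≠ t → |s - t| > 2 * R → ‖k (s, t)‖ ≤ C * Real.exp (-κ * |s - t|))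
    (hzero : ∀ s t : ℝ, (R < s ∧ R < t) ∨ (s < -R ∧ t < -R) → k (s, t) = 0)
    {s t : ℝ} (hst : s ≠ t) : ‖k (s, t)‖ ≤ kernelMajorant R C κ α |s - t| := by
  unfold kernelMajorant
  have hsing : 0 ≤ (Set.Iic (6 * R)).indicator (fun y ↦ y ^ (-α)) |s - t| :=
    Set.indicator_apply_nonneg fun _ ↦ by positivity
  by_cases hsquare : |s| ≤ 3 * R ∧ |t| ≤ 3 * R
  · have hmem : |s - t| ∈ Set.Iic (6 * R) := (abs_sub s t).trans (by linarith)
    calc ‖k (s, t)‖ ≤ C * |s - t| ^ (-α) := hnear s t hst hsquare.1 hsquare.2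
      _ ≤ _ := by
        rw [Set.indicator_of_mem hmem]
        gcongr
        exact le_add_of_nonneg_right (Real.exp_nonneg _)
  by_cases hdist : 2 * R < |s - t|
  · calc ‖k (s, t)‖ ≤ C * Real.exp (-κ * |s - t|) := hfar s t hst hdist
      _ ≤ _ := by
        gcongr
        exact le_add_of_nonneg_left hsing
  · have hsame_side : (R < s ∧ R < t) ∨ (s < -R ∧ t < -R) := by
      simp only [not_and_or, not_le, lt_abs] at hsquare
      rw [not_lt, abs_le] at hdist
      rcases hsquare with (hs | hs) | (ht | ht) <;>
        first
        | exact .inl ⟨by linarith, by linarith⟩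
        | exact .inr ⟨by linarith, by linarith⟩
    rw [hzero s t hsame_side, norm_zero]
    positivity

lemma isBounded_setOf_ne_zero_and_norm_sub_le
    (hzero : ∀ s t : ℝ, (R < s ∧ R < t) ∨ (s < -R ∧ t < -R) → k (s, t) = 0) (r : ℝ) :
    Bornology.IsBounded {z : ℝ × ℝ | k z ≠ 0 ∧ ‖z.1 - z.2‖ ≤ r} := by
  refine (Metric.isBounded_closedBall (x := 0) (r := R + r)).subset ?_
  rintro ⟨s, t⟩ ⟨hk, hst⟩
  have hsupp := mt (hzero s t) hk
  rw [Real.norm_eq_abs, abs_le] at hst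
  rw [mem_closedBall_zero_iff, norm_prod_le_iff, Real.norm_eq_abs, Real.norm_eq_abs, abs_le, abs_le]
  grind

end PiecewiseBoundedKernel

theorem stmt_6_general {𝕜 : Type*} [RCLike 𝕜] {k : ℝ × ℝ → 𝕜}
    (hk : AEStronglyMeasurable k (volume.prod volume)) {R C κ α : ℝ} (hC : 0 ≤ C) (hκ : 0 < κ)
    (hα : α < 1)
    (hnear : ∀ s t : ℝ, s ≠ t → |s| ≤ 3 * R → |t| ≤ 3 * R → ‖k (s, t)‖ ≤ C * |s - t| ^ (-α))
    (hfar : ∀ s t : ℝ, s ≠ t → |s - t| > 2 * R → ‖k (s, t)‖ ≤ C * Real.exp (-κ * |s - t|))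
    (hzero : ∀ s t : ℝ, (R < s ∧ R < t) ∨ (s < -R ∧ t < -R) → k (s, t) = 0) :
    ∃ K : Lp 𝕜 2 (volume : Measure ℝ) →L[𝕜] Lp 𝕜 2 (volume : Measure ℝ),
      IsCompactOperator K ∧ IsIntegralOperator k K := by
  have hφ : Measurable fun x ↦ ‖kernelMajorant R C κ α |x|‖ₑ :=
    (measurable_kernelMajorant.comp measurable_norm).enorm
  have hφ_int : ∫⁻ x, ‖kernelMajorant R C κ α |x|‖ₑ ≠ ∞ :=
    (integrable_kernelMajorant_abs hκ hα).2.ne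
  refine exists_isCompactOperator_isIntegralOperator_of_enorm_le_sub hk hφ hφ_int ?_
    (isBounded_setOf_ne_zero_and_norm_sub_le hzero)
  filter_upwards [ae_fst_ne_snd volume volume] with z hz
  rw [enorm_le_iff_norm_le]
  exact (norm_le_kernelMajorant hC hnear hfar hzero hz).trans (Real.le_norm_self _)

/-- Let `k : ℝ² → ℂ` be measurable and satisfy the Kernel assumption (B.1).
Then there exists a compact continuous linear operator `K` on `L²(ℝ; ℂ)` such that for
every `u ∈ L²(ℝ; ℂ)` the integral `∫ k(s,t) u(t) dt` converges absolutely for a.e. `s` and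
`(K u)(s) = ∫ k(s,t) u(t) dt` for a.e. `s`. -/
theorem stmt_6 (k : ℝ × ℝ → ℂ) (hk : Measurable k)
    (R C κ α : ℝ) (hR : 0 < R) (hC : 0 < C) (hκ : 0 < κ) (hα : α ∈ Set.Ico (0 : ℝ) 1)
    (hbdd1 : ∀ s t : ℝ, s ≠ t → |s| ≤ 3 * R → |t| ≤ 3 * R →
      ‖k (s, t)‖ ≤ C * |s - t| ^ (-α))
    (hbdd2 : ∀ s t : ℝ, s ≠ t → |s - t| > 2 * R →
      ‖k (s, t)‖ ≤ C * Real.exp (-κ * |s - t|))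
    (hzero : ∀ s t : ℝ, (R < s ∧ R < t) ∨ (s < -R ∧ t < -R) → k (s, t) = 0) :
    ∃ K : Lp ℂ 2 (volume : Measure ℝ) →L[ℂ] Lp ℂ 2 (volume : Measure ℝ),
      IsCompactOperator K ∧
      ∀ u : Lp ℂ 2 (volume : Measure ℝ),
        (∀ᵐ s : ℝ, Integrable (fun t : ℝ => k (s, t) * u t) volume) ∧
        (∀ᵐ s : ℝ, (K u : ℝ → ℂ) s = ∫ t : ℝ, k (s, t) * u t) := by
  exact stmt_6_general hk.aestronglyMeasurable hC.le hκ hα.2 hbdd1 hbdd2 hzero
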